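/- For a metric space (X,d) the following are equivalent: (1) (X,d) has asymptotic dimension 0; (2) the identity map id : (X, d_id^ul) → (X, d) is large scale continuous; (3) the identity map id : (X, d) → (X, d_id^ul) is a coarse equivalence. Here d_id^ul is the integral ultrametric induced by the identity map of (X,d). -/

import Mathlib

/-- `d` is a metric on the set `X`. -/
def IsMetricD {X : Type*} (d : X → X → ℝ) : Prop :=
  (∀ x, d x x = 0) ∧ (∀ x y, d x y = 0 → x = y) ∧ (∀ x y, d x y = d y x) ∧
    (∀ x y z, d x z ≤ d x y + d y z)

/-- the ultrametric (strong triangle) inequality. -/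
def IsUltraD {X : Type*} (d : X → X → ℝ) : Prop :=
  ∀ x y z, d x z ≤ max (d x y) (d y z)

/-- There is an `r`-chain joining `a` and `b`. -/
def ChainD {Y : Type*} (d : Y → Y → ℝ) (r : ℝ) (a b : Y) : Prop :=
  ∃ (k : ℕ) (c : ℕ → Y), c 0 = a ∧ c k = b ∧ ∀ i < k, d (c i) (c (i + 1)) < r

/-- asymptotic dimension 0: chains of uniformly bounded gauge are uniformly bounded. -/
def AsDimZeroD {Y : Type*} (d : Y → Y → ℝ) : Prop :=
  ∀ r > (0 : ℝ), ∃ s > (0 : ℝ), ∀ a b : Y, ChainD d r a b → d a b ≤ s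

/-- large scale continuous (uniformly bornologous). -/
def LSCD {X Y : Type*} (dX : X → X → ℝ) (dY : Y → Y → ℝ) (f : X → Y) : Prop :=
  ∀ R > (0 : ℝ), ∃ s > (0 : ℝ), ∀ x y : X, dX x y ≤ R → dY (f x) (f y) ≤ s

/-- uniformly proper. -/
def UnifProperD {X Y : Type*} (dX : X → X → ℝ) (dY : Y → Y → ℝ) (f : X → Y) : Prop :=
  ∀ R > (0 : ℝ), ∃ s > (0 : ℝ), ∀ x y : X, dY (f x) (f y) ≤ R → dX x y ≤ s

/-- coarsely surjective. -/
def CoarselySurjD {X Y : Type*} (dY : Y → Y → ℝ) (f : X → Y) : Prop :=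
  ∃ R > (0 : ℝ), ∀ y : Y, ∃ x : X, dY (f x) y ≤ R

/-- coarse embedding. -/
def CoarseEmbD {X Y : Type*} (dX : X → X → ℝ) (dY : Y → Y → ℝ) (f : X → Y) : Prop :=
  LSCD dX dY f ∧ UnifProperD dX dY f

/-- coarse equivalence. -/
def CoarseEquivD {X Y : Type*} (dX : X → X → ℝ) (dY : Y → Y → ℝ) (f : X → Y) : Prop :=
  LSCD dX dY f ∧ UnifProperD dX dY f ∧ CoarselySurjD dY f

/-- the induced integral ultrametric `d_f^ul`. -/
noncomputable def dulD {X Y : Type*} (d : Y → Y → ℝ) (f : X → Y) (x y : X) : ℝ :=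
  letI := Classical.decEq X
  if x = y then 0 else
    ((sInf {r : ℕ | 1 ≤ r ∧ ChainD d (r : ℝ) (f x) (f y)} : ℕ) : ℝ)

/-- `d` is a metric on the subset `A`. -/
def IsMetricOnD {X : Type*} (d : X → X → ℝ) (A : Set X) : Prop :=
  (∀ x ∈ A, d x x = 0) ∧ (∀ x ∈ A, ∀ y ∈ A, d x y = 0 → x = y) ∧
    (∀ x ∈ A, ∀ y ∈ A, d x y = d y x) ∧
    (∀ x ∈ A, ∀ y ∈ A, ∀ z ∈ A, d x z ≤ d x y + d y z)

/-- the ultrametric inequality on a subset. -/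
def IsUltraOnD {X : Type*} (d : X → X → ℝ) (A : Set X) : Prop :=
  ∀ x ∈ A, ∀ y ∈ A, ∀ z ∈ A, d x z ≤ max (d x y) (d y z)

/-- every triangle is isosceles. -/
def IsoscelesD {X : Type*} (d : X → X → ℝ) : Prop :=
  ∀ x y z : X, d x y = d y z ∨ d x y = d x z ∨ d y z = d x z

/-- every triangle with vertices in `A` is isosceles. -/
def IsoscelesOnD {X : Type*} (d : X → X → ℝ) (A : Set X) : Prop :=
  ∀ x ∈ A, ∀ y ∈ A, ∀ z ∈ A, d x y = d y z ∨ d x y = d x z ∨ d y z = d x z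

/-- a set is bounded with respect to the distance function `d`. -/
def BoundedD {X : Type*} (d : X → X → ℝ) (A : Set X) : Prop :=
  ∃ C : ℝ, ∀ x ∈ A, ∀ y ∈ A, d x y ≤ C

/-- `d` makes the disjoint union `Σ s, X s` a coarse disjoint union of the family
of metrics `ds`. -/
def IsCoarseDisjointUnion {S : Type*} {X : S → Type*} (ds : ∀ s, X s → X s → ℝ)
    (d : (Σ s, X s) → (Σ s, X s) → ℝ) : Prop :=
  (∀ (s : S) (x y : X s), d ⟨s, x⟩ ⟨s, y⟩ = ds s x y) ∧
    ∀ M > (0 : ℝ), ∃ B : ∀ s, Set (X s),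
      (∀ s, BoundedD (ds s) (B s)) ∧ {s | (B s).Nonempty}.Finite ∧
      ∀ (s t : S) (x : X s) (y : X t), s ≠ t → x ∉ B s → y ∉ B t → d ⟨s, x⟩ ⟨t, y⟩ > M

theorem aux_chain_of_dul {X : Type*} [MetricSpace X] (x y : X) (R : ℝ) (hR : 0 < R)
    (h : dulD (dist : X → X → ℝ) (id : X → X) x y ≤ R) :
    ChainD (dist : X → X → ℝ) R x y := by
  unfold dulD at h
  by_cases hxy : x = y
  · subst hxy
    exact ⟨0, fun _ => x, rfl, rfl, fun i hi => absurd hi (Nat.not_lt_zero i)⟩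
  · simp only [hxy, if_false] at h
    have hne : {r : ℕ | 1 ≤ r ∧ ChainD (dist : X → X → ℝ) (r : ℝ) (id x) (id y)}.Nonempty := by
      obtain ⟨n, hn⟩ := exists_nat_gt (dist x y)
      refine ⟨n + 1, by omega, 1, fun i => if i = 0 then x else y, by simp, by simp, ?_⟩
      intro i hi
      obtain rfl : i = 0 := by omega
      simp
      linarith
    obtain ⟨_, k, c, h0, hk, hc⟩ := Nat.sInf_mem hne
    exact ⟨k, c, h0, hk, fun i hi => (hc i hi).trans_le h⟩

theorem aux_dul_le {X : Type*} [MetricSpace X] (x y : X) (n : ℕ) (hn : 1 ≤ n)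
    (h : ChainD (dist : X → X → ℝ) (n : ℝ) x y) :
    dulD (dist : X → X → ℝ) (id : X → X) x y ≤ n := by
  unfold dulD
  by_cases hxy : x = y
  · simp [hxy]
  · simp only [hxy, if_false]
    exact_mod_cast Nat.sInf_le (show n ∈ {r : ℕ | 1 ≤ r ∧
      ChainD (dist : X → X → ℝ) (r : ℝ) (id x) (id y)} from ⟨hn, h⟩)

theorem aux_iff {X : Type*} [MetricSpace X] :
    AsDimZeroD (dist : X → X → ℝ) ↔
      LSCD (dulD (dist : X → X → ℝ) (id : X → X)) (dist : X → X → ℝ) (id : X → X) := by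
  constructor
  · intro h R hR
    obtain ⟨s, hs, H⟩ := h R hR
    exact ⟨s, hs, fun x y hxy => H x y (aux_chain_of_dul x y R hR hxy)⟩
  · intro h r hr
    obtain ⟨n, hn⟩ := exists_nat_gt r
    have hn0 : (0 : ℝ) < n := hr.trans hn
    obtain ⟨s, hs, H⟩ := h n hn0
    refine ⟨s, hs, fun a b ⟨k, c, h0, hk, hc⟩ => H a b ?_⟩
    exact aux_dul_le a b n (by exact_mod_cast hn0) ⟨k, c, h0, hk, fun i hi => (hc i hi).trans hn⟩

/-- For a metric space `(X, d)` the following are equivalent: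
(1) `(X, d)` has asymptotic dimension 0;
(2) `id : (X, d_id^ul) → (X, d)` is large scale continuous;
(3) `id : (X, d) → (X, d_id^ul)` is a coarse equivalence. -/
theorem asdim_zero_iff_dul_id
    {X : Type*} [MetricSpace X] :
    (AsDimZeroD (dist : X → X → ℝ) ↔
        LSCD (dulD (dist : X → X → ℝ) (id : X → X)) (dist : X → X → ℝ) (id : X → X)) ∧
    (AsDimZeroD (dist : X → X → ℝ) ↔
        CoarseEquivD (dist : X → X → ℝ) (dulD (dist : X → X → ℝ) (id : X → X)) (id : X → X)) := by
  refine ⟨aux_iff, aux_iff.trans ⟨fun h => ⟨?_, h, ?_⟩, fun h => h.2.1⟩⟩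
  · intro R hR
    obtain ⟨n, hn⟩ := exists_nat_gt R
    have hn0 : (0 : ℝ) < n := hR.trans hn
    refine ⟨n, hn0, fun x y hxy => aux_dul_le x y n (by exact_mod_cast hn0) ?_⟩
    refine ⟨1, fun i => if i = 0 then x else y, by simp, by simp, ?_⟩
    intro i hi
    obtain rfl : i = 0 := by omega
    simp
    linarith
  · exact ⟨1, one_pos, fun y => ⟨y, by simp [dulD]⟩⟩
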